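/- arXiv:1709.04277 — 3 statements merged into one kernel-verified Lean document; each statement's English description precedes it below -/
import Mathlib

section
/- Let c, λ, τ, h_j, h_{j+1}, ζ_j, ξ_j be real numbers with c ≠ 0, c⁴ ≠ λ², h_j > 0, h_{j+1} > 0, and set ζ_{j-1} = ζ_j − (c·h_j + λ·h_j/c)·ξ_j, ζ_{j+1} = ζ_j + (c·h_{j+1} + λ·h_{j+1}/c)·ξ_j, ξ_{j-1} = ξ_j − (c·h_j − λ·h_j/c)·ζ_j, ξ_{j+1} = ξ_j + (c·h_{j+1} − λ·h_{j+1}/c)·ζ_j. If both SUPG discrete equations hold, i.e. (c² − λ)·((h_j/6)·ζ_{j-1} + ((h_j + h_{j+1})/3)·ζ_j + (h_{j+1}/6)·ζ_{j+1}) + τ·c·(−ζ_{j-1}/h_j + (1/h_j + 1/h_{j+1})·ζ_j − ζ_{j+1}/h_{j+1}) − (τ·c² − c + τ·λ)·(ξ_{j-1} − ξ_{j+1})/2 = 0 and (τ·c² − c − τ·λ)·(ζ_{j-1} − ζ_{j+1})/2 − τ·c·(−ξ_{j-1}/h_j + (1/h_j + 1/h_{j+1})·ξ_j − ξ_{j+1}/h_{j+1})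 − (c² + λ)·((h_j/6)·ξ_{j-1} + ((h_j + h_{j+1})/3)·ξ_j + (h_{j+1}/6)·ξ_{j+1}) = 0, then τ·ζ_j + ((h_{j+1} − h_j)/3)·ξ_j = 0 and ((h_{j+1} − h_j)/3)·ζ_j + τ·ξ_j = 0. -/
/-- If both SUPG discrete equations hold at node `r_j` (asymptotic regime, m = 1,
with the neighbor nodal values substituted), then the limiting two-by-two system
for the stability parameter holds. -/
theorem supg_system_implies_limiting_system
    (c lam tau hj hjp1 zj xj : ℝ)
    (hc : c ≠ 0) (hclam : c ^ 4 ≠ lam ^ 2) (hhj : 0 < hj) (hhjp1 : 0 < hjp1)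
    (zjm1 zjp1 xjm1 xjp1 : ℝ)
    (hz1 : zjm1 = zj - (c * hj + lam * hj / c) * xj)
    (hz2 : zjp1 = zj + (c * hjp1 + lam * hjp1 / c) * xj)
    (hx1 : xjm1 = xj - (c * hj - lam * hj / c) * zj)
    (hx2 : xjp1 = xj + (c * hjp1 - lam * hjp1 / c) * zj)
    (heq1 : (c ^ 2 - lam) * ((hj / 6) * zjm1 + ((hj + hjp1) / 3) * zj + (hjp1 / 6) * zjp1)
      + tau * c * (-(zjm1 / hj) + (1 / hj + 1 / hjp1) * zj - zjp1 / hjp1)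
      - (tau * c ^ 2 - c + tau * lam) * ((xjm1 - xjp1) / 2) = 0)
    (heq2 : (tau * c ^ 2 - c - tau * lam) * ((zjm1 - zjp1) / 2)
      - tau * c * (-(xjm1 / hj) + (1 / hj + 1 / hjp1) * xj - xjp1 / hjp1)
      - (c ^ 2 + lam) * ((hj / 6) * xjm1 + ((hj + hjp1) / 3) * xj + (hjp1 / 6) * xjp1) = 0) :
    tau * zj + ((hjp1 - hj) / 3) * xj = 0 ∧
    ((hjp1 - hj) / 3) * zj + tau * xj = 0 := by
  have hAB : (c ^ 2 + lam) * (c ^ 2 - lam) ≠ 0 := by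
    intro h
    apply hclam
    linear_combination h
  have hH : hj + hjp1 ≠ 0 := by positivity
  have hj0 : hj ≠ 0 := hhj.ne'
  have hp0 : hjp1 ≠ 0 := hhjp1.ne'
  have hK : (c ^ 2 + lam) * (c ^ 2 - lam) * (hj + hjp1) / (2 * c) ≠ 0 :=
    div_ne_zero (mul_ne_zero hAB hH) (mul_ne_zero two_ne_zero hc)
  subst hz1 hz2 hx1 hx2
  constructor
  · apply (mul_eq_zero.mp _).resolve_left hK
    rw [← heq1]
    field_simp
    ring
  · apply (mul_eq_zero.mp _).resolve_left hK
    rw [← neg_eq_zero, ← heq2]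
    field_simp
    ring
end

section
/- Let c, λ, τ, h_j, h_{j+1}, ζ_j, ξ_j be real numbers with c ≠ 0, c⁴ ≠ λ², h_j > 0, h_{j+1} > 0 and (ζ_j, ξ_j) ≠ (0, 0). Set ζ_{j-1} = ζ_j − (c·h_j + λ·h_j/c)·ξ_j, ζ_{j+1} = ζ_j + (c·h_{j+1} + λ·h_{j+1}/c)·ξ_j, ξ_{j-1} = ξ_j − (c·h_j − λ·h_j/c)·ζ_j, ξ_{j+1} = ξ_j + (c·h_{j+1} − λ·h_{j+1}/c)·ζ_j. If both SUPG discrete equations hold at the node r_j, i.e. (c² − λ)·((h_j/6)·ζ_{j-1} + ((h_j + h_{j+1})/3)·ζ_j + (h_{j+1}/6)·ζ_{j+1}) + τ·c·(−ζ_{j-1}/h_j + (1/h_j + 1/h_{j+1})·ζ_j − ζ_{j+1}/h_{j+1}) − (τ·c² − c + τ·λ)·(ξ_{j-1} − ξ_{j+1})/2 = 0 and (τ·c² − c − τ·λ)·(ζ_{j-1} − ζ_{j+1})/2 − τ·c·(−ξ_{j-1}/h_j + (1/h_j + 1/h_{j+1})·ξ_j − ξ_{j+1}/h_{j+1}) −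 (c² + λ)·((h_j/6)·ξ_{j-1} + ((h_j + h_{j+1})/3)·ξ_j + (h_{j+1}/6)·ξ_{j+1}) = 0, then τ = (h_{j+1} − h_j)/3 or τ = −(h_{j+1} − h_j)/3. -/
/-- Determination of the SUPG stability parameter: if the two SUPG discrete
equations hold at node `r_j` with a nontrivial nodal pair `(ζ_j, ξ_j)`, then
`τ = ±(h_{j+1} - h_j)/3`. -/
theorem supg_stability_parameter
    (c lam tau hj hjp1 zj xj : ℝ)
    (hc : c ≠ 0) (hclam : c ^ 4 ≠ lam ^ 2) (hhj : 0 < hj) (hhjp1 : 0 < hjp1)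
    (hnt : ¬(zj = 0 ∧ xj = 0))
    (zjm1 zjp1 xjm1 xjp1 : ℝ)
    (hz1 : zjm1 = zj - (c * hj + lam * hj / c) * xj)
    (hz2 : zjp1 = zj + (c * hjp1 + lam * hjp1 / c) * xj)
    (hx1 : xjm1 = xj - (c * hj - lam * hj / c) * zj)
    (hx2 : xjp1 = xj + (c * hjp1 - lam * hjp1 / c) * zj)
    (heq1 : (c ^ 2 - lam) * ((hj / 6) * zjm1 + ((hj + hjp1) / 3) * zj + (hjp1 / 6) * zjp1)
      + tau * c * (-(zjm1 / hj) + (1 / hj + 1 / hjp1) * zj - zjp1 / hjp1)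
      - (tau * c ^ 2 - c + tau * lam) * ((xjm1 - xjp1) / 2) = 0)
    (heq2 : (tau * c ^ 2 - c - tau * lam) * ((zjm1 - zjp1) / 2)
      - tau * c * (-(xjm1 / hj) + (1 / hj + 1 / hjp1) * xj - xjp1 / hjp1)
      - (c ^ 2 + lam) * ((hj / 6) * xjm1 + ((hj + hjp1) / 3) * xj + (hjp1 / 6) * xjp1) = 0) :
    tau = (hjp1 - hj) / 3 ∨ tau = -((hjp1 - hj) / 3) := by
  have hK : (c ^ 2 - lam) * (c ^ 2 + lam) * (hj + hjp1) / (2 * c) ≠ 0 := by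
    have h1 : (c ^ 2 - lam) * (c ^ 2 + lam) ≠ 0 := by
      intro h
      exact hclam (by linear_combination h)
    have h2 : hj + hjp1 ≠ 0 := by positivity
    have h3 : 2 * c ≠ 0 := mul_ne_zero two_ne_zero hc
    exact div_ne_zero (mul_ne_zero h1 h2) h3
  have hj0 : hj ≠ 0 := hhj.ne'
  have hjp0 : hjp1 ≠ 0 := hhjp1.ne'
  subst hz1 hz2 hx1 hx2
  have e1 : tau * zj + (hjp1 - hj) / 3 * xj = 0 := by
    apply (mul_eq_zero.mp _).resolve_left hK
    rw [← heq1]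
    field_simp
    ring
  have e2 : tau * xj + (hjp1 - hj) / 3 * zj = 0 := by
    apply (mul_eq_zero.mp _).resolve_left hK
    rw [← neg_eq_zero, ← heq2]
    field_simp
    ring
  have hz : (tau ^ 2 - ((hjp1 - hj) / 3) ^ 2) * zj = 0 := by
    linear_combination tau * e1 - (hjp1 - hj) / 3 * e2
  have hx : (tau ^ 2 - ((hjp1 - hj) / 3) ^ 2) * xj = 0 := by
    linear_combination tau * e2 - (hjp1 - hj) / 3 * e1
  have hsq : tau ^ 2 = ((hjp1 - hj) / 3) ^ 2 := by
    by_contra hne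
    have hne' := sub_ne_zero.mpr hne
    exact hnt ⟨(mul_eq_zero.mp hz).resolve_left hne', (mul_eq_zero.mp hx).resolve_left hne'⟩
  exact sq_eq_sq_iff_eq_or_eq_neg.mp hsq
end

section
/- Fix real numbers λ, τ, h_j > 0, h_{j+1} > 0, ζ_j, ξ_j, and for each real c ≠ 0 define ζ_{j-1}(c) = ζ_j − (c·h_j + λ·h_j/c)·ξ_j, ζ_{j+1}(c) = ζ_j + (c·h_{j+1} + λ·h_{j+1}/c)·ξ_j, ξ_{j-1}(c) = ξ_j − (c·h_j − λ·h_j/c)·ζ_j, ξ_{j+1}(c) = ξ_j + (c·h_{j+1} − λ·h_{j+1}/c)·ζ_j, and let L(c) = (c² − λ)·((h_j/6)·ζ_{j-1}(c) + ((h_j + h_{j+1})/3)·ζ_j + (h_{j+1}/6)·ζ_{j+1}(c)) + τ·c·(−ζ_{j-1}(c)/h_j + (1/h_j + 1/h_{j+1})·ζ_j − ζ_{j+1}(c)/h_{j+1}) − (τ·c² − c + τ·λ)·(ξ_{j-1}(c) − ξ_{j+1}(c))/2. Then L(c)/(c³·(h_j + h_{j+1})) tends to (τ/2)·ζ_j +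 ((h_{j+1} − h_j)/6)·ξ_j as c → ∞. -/
open Filter Topology

/-- The rescaled first SUPG row tends, as the speed of light `c → ∞`, to the
limiting expression `(τ/2)·ζ_j + ((h_{j+1} − h_j)/6)·ξ_j`. -/
theorem supg_first_row_limit
    (lam tau hj hjp1 zj xj : ℝ) (hhj : 0 < hj) (hhjp1 : 0 < hjp1)
    (zjm1 zjp1 xjm1 xjp1 : ℝ → ℝ) (L : ℝ → ℝ)
    (hz1 : ∀ c : ℝ, c ≠ 0 → zjm1 c = zj - (c * hj + lam * hj / c) * xj)
    (hz2 : ∀ c : ℝ, c ≠ 0 → zjp1 c = zj + (c * hjp1 + lam * hjp1 / c) * xj)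
    (hx1 : ∀ c : ℝ, c ≠ 0 → xjm1 c = xj - (c * hj - lam * hj / c) * zj)
    (hx2 : ∀ c : ℝ, c ≠ 0 → xjp1 c = xj + (c * hjp1 - lam * hjp1 / c) * zj)
    (hL : ∀ c : ℝ, c ≠ 0 → L c =
      (c ^ 2 - lam) * ((hj / 6) * zjm1 c + ((hj + hjp1) / 3) * zj + (hjp1 / 6) * zjp1 c)
      + tau * c * (-(zjm1 c / hj) + (1 / hj + 1 / hjp1) * zj - zjp1 c / hjp1)
      - (tau * c ^ 2 - c + tau * lam) * ((xjm1 c - xjp1 c) / 2)) :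
    Tendsto (fun c : ℝ => L c / (c ^ 3 * (hj + hjp1))) atTop
      (𝓝 ((tau / 2) * zj + ((hjp1 - hj) / 6) * xj)) := by
  have key : Tendsto (fun c : ℝ => (fun u : ℝ =>
      (1 - lam * u ^ 2) * (zj * u / 2 + (1 + lam * u ^ 2) * ((hjp1 - hj) / 6) * xj)
      + (tau - u + tau * lam * u ^ 2) * (1 - lam * u ^ 2) / 2 * zj) c⁻¹) atTop
      (𝓝 ((tau / 2) * zj + ((hjp1 - hj) / 6) * xj)) := by
    have hc : Continuous (fun u : ℝ =>
      (1 - lam * u ^ 2) * (zj * u / 2 + (1 + lam * u ^ 2) * ((hjp1 - hj) / 6) * xj)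
      + (tau - u + tau * lam * u ^ 2) * (1 - lam * u ^ 2) / 2 * zj) := by fun_prop
    have h := (hc.tendsto 0).comp (tendsto_inv_atTop_zero (𝕜 := ℝ))
    convert h using 2
    · rfl
    · ring
  refine key.congr' ?_
  filter_upwards [eventually_gt_atTop (0 : ℝ)] with c hc
  have hc0 : c ≠ 0 := hc.ne'
  have h1 : hj ≠ 0 := hhj.ne'
  have h2 : hjp1 ≠ 0 := hhjp1.ne'
  have h3 : hj + hjp1 ≠ 0 := (add_pos hhj hhjp1).ne'
  rw [hL c hc0, hz1 c hc0, hz2 c hc0, hx1 c hc0, hx2 c hc0]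
  field_simp
  ring
end
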